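/- Assume (p₀), (V_α), (G_β). Then there exist constants C < ∞ and c > 0 such that for all x ∈ G, R > 0 and positive integers n, P_x(T_{B(x,R)} ≤ n) ≤ C·exp(−(c·R^β/n)^{1/(β−1)}). -/

import Mathlib

open scoped ENNReal

open Classical in
noncomputable def nstep {V : Type*} (p : V → V → ℝ) : ℕ → V → V → ℝ
  | 0, x, y => if x = y then 1 else 0
  | n + 1, x, y => ∑' z, nstep p n x z * p z y

noncomputable def green {V : Type*} (p : V → V → ℝ) (lam : V → ℝ) (x y : V) : ℝ :=
  (1 / lam y) * ∑' n, nstep p n x y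

open Classical in
noncomputable def killedKernel {V : Type*} (p : V → V → ℝ) (U : Set V) (x y : V) : ℝ :=
  if x ∈ U ∧ y ∈ U then p x y else 0

noncomputable def killedGreen {V : Type*} (p : V → V → ℝ) (lam : V → ℝ) (U : Set V) (x y : V) : ℝ :=
  (1 / lam y) * ∑' n, nstep (killedKernel p U) n x y

open Classical in
noncomputable def hitProb {V : Type*} (p : V → V → ℝ) (A : Set V) (x : V) : ℝ :=
  ∑' n : ℕ, ∑' y : V, if y ∈ A then nstep (fun a b => if a ∈ A then 0 else p a b) n x y else 0

open Classical in
noncomputable def eqMeasure {V : Type*} (p : V → V → ℝ) (lam : V → ℝ) (A : Set V) (x : V) : ℝ :=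
  if x ∈ A then lam x * (1 - ∑' y, p x y * hitProb p A y) else 0

noncomputable def capaE {V : Type*} (p : V → V → ℝ) (lam : V → ℝ) (A : Set V) : ℝ≥0∞ :=
  ∑' x : V, Set.indicator A (fun v => ENNReal.ofReal (eqMeasure p lam A v)) x

/-! ### The averaging operator -/

/-- averaging operator of a kernel with finite range -/
noncomputable def opK {V : Type*} (N : V → Finset V) (k : V → V → ℝ) (f : V → ℝ) (y : V) : ℝ :=
  ∑ u ∈ N y, k y u * f u

lemma nstep_supp {V : Type*} (N : V → Finset V) (k : V → V → ℝ)
    (hk : ∀ y u, u ∉ N y → k y u = 0) (n : ℕ) (y : V) :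
    ∃ S : Finset V, ∀ z, z ∉ S → nstep k n y z = 0 := by
  classical
  induction n with
  | zero =>
    refine ⟨{y}, fun z hz => ?_⟩
    have : y ≠ z := by
      intro h; apply hz; simp [h]
    simp [nstep, this]
  | succ n ih =>
    obtain ⟨S, hS⟩ := ih
    refine ⟨S.biUnion N, fun z hz => ?_⟩
    rw [nstep]
    have : ∀ u, nstep k n y u * k u z = 0 := by
      intro u
      by_cases hu : u ∈ S
      · rw [hk u z, mul_zero]
        intro h
        exact hz (Finset.mem_biUnion.2 ⟨u, hu, h⟩)
      · rw [hS u hu, zero_mul]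
    simp [this]

lemma tsum_nstep_mul {V : Type*} (N : V → Finset V) (k : V → V → ℝ)
    (hk : ∀ y u, u ∉ N y → k y u = 0) (n : ℕ) (f : V → ℝ) (y : V) :
    ∑' z, nstep k n y z * f z = (opK N k)^[n] f y := by
  classical
  induction n generalizing f with
  | zero =>
    rw [tsum_eq_single y]
    · simp [nstep]
    · intro z hz
      simp [nstep, hz.symm]
  | succ n ih =>
    obtain ⟨S, hS⟩ := nstep_supp N k hk n y
    rw [Function.iterate_succ_apply, ← ih]
    have h1 : ∀ z, nstep k (n+1) y z = ∑ u ∈ S, nstep k n y u * k u z := by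
      intro z
      rw [nstep, tsum_eq_sum]
      intro u hu
      rw [hS u hu, zero_mul]
    have h2 : ∀ z, z ∉ S.biUnion N → nstep k (n+1) y z * f z = 0 := by
      intro z hz
      rw [h1, Finset.sum_eq_zero, zero_mul]
      intro u hu
      rw [hk u z, mul_zero]
      intro h
      exact hz (Finset.mem_biUnion.2 ⟨u, hu, h⟩)
    rw [tsum_eq_sum (s := S.biUnion N) (fun z hz => h2 z hz),
      tsum_eq_sum (s := S) (fun u hu => by rw [hS u hu, zero_mul])]
    simp_rw [h1, Finset.sum_mul]
    rw [Finset.sum_comm]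
    refine Finset.sum_congr rfl fun u hu => ?_
    rw [opK, Finset.mul_sum]
    symm
    rw [Finset.sum_subset (Finset.subset_biUnion_of_mem N hu)]
    · refine Finset.sum_congr rfl fun z _ => by ring
    · intro z _ hz
      rw [hk u z hz]; ring

lemma nstep_succ_left {V : Type*} (N : V → Finset V) (k : V → V → ℝ)
    (hk : ∀ y u, u ∉ N y → k y u = 0) (n : ℕ) (y z : V) :
    nstep k (n+1) y z = ∑ u ∈ N y, k y u * nstep k n u z := by
  classical
  have h : ∀ m v, nstep k m v z = (opK N k)^[m] (fun u => if u = z then 1 else 0) v := by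
    intro m v
    rw [← tsum_nstep_mul N k hk, tsum_eq_single z]
    · simp
    · intro u hu; simp [hu]
  rw [h, Function.iterate_succ_apply', opK]
  simp_rw [h]

lemma mass_succ {V : Type*} (N : V → Finset V) (k : V → V → ℝ)
    (hk : ∀ y u, u ∉ N y → k y u = 0) (n : ℕ) (y : V) :
    ∑' z, nstep k (n+1) y z = ∑ u ∈ N y, k y u * ∑' z, nstep k n u z := by
  have h : ∀ m v, ∑' z, nstep k m v z = (opK N k)^[m] (fun _ => 1) v := by
    intro m v
    rw [← tsum_nstep_mul N k hk]
    simp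
  rw [h, Function.iterate_succ_apply', opK]
  simp_rw [h]

lemma mass_zero {V : Type*} (k : V → V → ℝ) (y : V) : ∑' z, nstep k 0 y z = 1 := by
  classical
  rw [tsum_eq_single y]
  · simp [nstep]
  · intro z hz; simp [nstep, hz.symm]

lemma nstep_nonneg {V : Type*} (k : V → V → ℝ) (hk : ∀ y u, 0 ≤ k y u) (n : ℕ) (y z : V) :
    0 ≤ nstep k n y z := by
  classical
  induction n generalizing z with
  | zero => rw [nstep]; split_ifs <;> norm_num
  | succ n ih => rw [nstep]; exact tsum_nonneg fun u => mul_nonneg (ih u) (hk u z)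

/-! ### Exit probabilities -/

open Classical in
/-- probability of leaving `U` within `n` steps -/
noncomputable def exitQ {V : Type*} (p : V → V → ℝ) (U : Set V) (n : ℕ) (y : V) : ℝ :=
  if y ∈ U then 1 - ∑' z, nstep (killedKernel p U) n y z else 1

lemma exitQ_succ {V : Type*} (N : V → Finset V) (p : V → V → ℝ)
    (hp : ∀ y u, u ∉ N y → p y u = 0) (h1 : ∀ y, ∑ u ∈ N y, p y u = 1)
    (U : Set V) (n : ℕ) (y : V) (hy : y ∈ U) :
    exitQ p U (n+1) y = ∑ u ∈ N y, p y u * exitQ p U n u := by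
  classical
  rw [exitQ, if_pos hy, mass_succ N]
  · rw [← h1 y, ← Finset.sum_sub_distrib]
    refine Finset.sum_congr rfl fun u _ => ?_
    rw [exitQ, killedKernel]
    by_cases hu : u ∈ U
    · simp only [hy, hu, and_self, if_true]; ring
    · simp [hu]
  · intro v u hu
    rw [killedKernel, hp v u hu]; simp

lemma exitQ_zero {V : Type*} (p : V → V → ℝ) (U : Set V) (y : V) (hy : y ∈ U) :
    exitQ p U 0 y = 0 := by
  rw [exitQ, if_pos hy, mass_zero, sub_self]

lemma exitQ_le_one {V : Type*} (p : V → V → ℝ) (hp : ∀ y u, 0 ≤ p y u)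
    (U : Set V) (n : ℕ) (y : V) : exitQ p U n y ≤ 1 := by
  rw [exitQ]
  split_ifs
  · have : 0 ≤ ∑' z, nstep (killedKernel p U) n y z :=
      tsum_nonneg fun z => nstep_nonneg _ (fun a b => by
        rw [killedKernel]; split_ifs
        · exact hp a b
        · exact le_rfl) n y z
    linarith
  · exact le_rfl

/-- In few steps the walk cannot leave. -/
lemma exitQ_short {V : Type*} (N : V → Finset V) (p d : V → V → ℝ)
    (hp : ∀ y u, u ∉ N y → p y u = 0) (h1 : ∀ y, ∑ u ∈ N y, p y u = 1)
    (hpn : ∀ y u, 0 ≤ p y u)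
    (hd_tri : ∀ x y z, d x z ≤ d x y + d y z)
    (D : ℝ) (hD : 0 ≤ D) (hN : ∀ y, ∀ u ∈ N y, d y u ≤ D) (x : V) (R : ℝ) (n : ℕ) (y : V)
    (hy : d x y + n * D ≤ R) : exitQ p {v | d x v ≤ R} n y ≤ 0 := by
  induction n generalizing y with
  | zero => rw [exitQ_zero]; simpa using hy
  | succ n ih =>
    push_cast at hy
    have : 0 ≤ (n:ℝ) * D := by positivity
    rw [exitQ_succ N p hp h1]
    · refine Finset.sum_nonpos fun u hu => ?_
      refine mul_nonpos_of_nonneg_of_nonpos (hpn _ _) (ih u ?_)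
      have := hd_tri x y u
      have := hN y u hu
      linarith
    · show d x y ≤ R
      linarith

/-- Iterating over scales. -/
lemma exitQ_iter {V : Type*} (N : V → Finset V) (p d : V → V → ℝ)
    (hp : ∀ y u, u ∉ N y → p y u = 0) (h1 : ∀ y, ∑ u ∈ N y, p y u = 1)
    (hpn : ∀ y u, 0 ≤ p y u)
    (hd_self : ∀ x, d x x = 0)
    (hd_tri : ∀ x y z, d x z ≤ d x y + d y z)
    (D : ℝ) (hD : 0 ≤ D) (hN : ∀ y, ∀ u ∈ N y, d y u ≤ D)
    (r μ ε : ℝ) (hr : 0 ≤ r) (hμ : 0 ≤ μ) (hε : ε ≤ 1)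
    (hψ : ∀ y₀, ∃ ψ : V → ℝ, (∀ y, 0 ≤ ψ y) ∧ (∀ y, r < d y₀ y → 1 ≤ ψ y) ∧ ψ y₀ ≤ 1 - ε ∧
      ∀ y, ∑ u ∈ N y, p y u * ψ u ≤ Real.exp μ * ψ y)
    (x : V) (R : ℝ) (j : ℕ) : ∀ (n : ℕ) (y : V), d x y + j * (r + D) ≤ R →
      exitQ p {v | d x v ≤ R} n y ≤ Real.exp (μ * n) * (1 - ε) ^ j := by
  induction j with
  | zero =>
    intro n y _
    refine (exitQ_le_one p hpn _ n y).trans ?_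
    simp only [pow_zero, mul_one]
    exact Real.one_le_exp (by positivity)
  | succ j ih =>
    intro n y₀ hy₀
    push_cast at hy₀
    obtain ⟨ψ, ψ0, ψ1, ψy, ψP⟩ := hψ y₀
    have hε' : 0 ≤ 1 - ε := by linarith
    have hjr : 0 ≤ (j:ℝ) * (r + D) := by positivity
    have key : ∀ n z, d y₀ z ≤ r → exitQ p {v | d x v ≤ R} n z ≤
        Real.exp (μ * n) * (1 - ε) ^ j * ψ z := by
      intro n
      induction n with
      | zero =>
        intro z hz
        rw [exitQ_zero]
        · have := ψ0 z
          positivity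
        · show d x z ≤ R
          have := hd_tri x y₀ z
          linarith
      | succ n ihn =>
        intro z hz
        rw [exitQ_succ N p hp h1]
        · calc ∑ u ∈ N z, p z u * exitQ p {v | d x v ≤ R} n u
              ≤ ∑ u ∈ N z, p z u * (Real.exp (μ * n) * (1 - ε) ^ j * ψ u) := by
                refine Finset.sum_le_sum fun u hu => ?_
                refine mul_le_mul_of_nonneg_left ?_ (hpn _ _)
                by_cases hur : d y₀ u ≤ r
                · exact ihn u hur
                · push Not at hur
                  have h2 := hd_tri y₀ z u
                  have h3 := hN z u hu
                  have h4 := hd_tri x y₀ u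
                  refine (ih n u (by linarith)).trans ?_
                  exact le_mul_of_one_le_right (by positivity) (ψ1 u hur)
            _ = Real.exp (μ * n) * (1 - ε) ^ j * ∑ u ∈ N z, p z u * ψ u := by
                rw [Finset.mul_sum]
                exact Finset.sum_congr rfl fun u _ => by ring
            _ ≤ Real.exp (μ * n) * (1 - ε) ^ j * (Real.exp μ * ψ z) :=
                mul_le_mul_of_nonneg_left (ψP z) (by positivity)
            _ = Real.exp (μ * (n+1 : ℕ)) * (1 - ε) ^ j * ψ z := by
                push_cast
                rw [mul_add, Real.exp_add]; ring_nf
        · show d x z ≤ R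
          have := hd_tri x y₀ z
          linarith
    refine (key n y₀ (by rw [hd_self]; exact hr)).trans ?_
    rw [pow_succ, ← mul_assoc]
    exact mul_le_mul_of_nonneg_left ψy (by positivity)

/-- Choosing the scale. -/
lemma optimize (β M e D : ℝ) (hβ : 2 ≤ β) (hM : 0 < M) (he : 0 < e) (hD : 0 < D) :
    ∃ c : ℝ, 0 < c ∧ ∀ (R : ℝ) (n : ℕ), 0 < R → 0 < n → R ≤ n * D →
      ∃ ρ : ℝ, 1 ≤ ρ ∧
        M * ρ ^ (-β) * n - e * R / ρ ≤ -(c * R ^ β / n) ^ ((1:ℝ) / (β - 1)) := by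
  set s : ℝ := 1 / (β - 1) with hs
  have hb : 0 < β - 1 := by linarith
  have hs0 : 0 < s := by positivity
  have hsb : (β - 1) * s = 1 := by rw [hs]; field_simp
  set c : ℝ := min ((e/2) ^ (β - 1) * (e / (2*M))) ((e/2) ^ (β - 1) / D) with hc
  have hc0 : 0 < c := by
    rw [hc]; apply lt_min <;> positivity
  refine ⟨c, hc0, fun R n hR hn hRn => ?_⟩
  have hn' : (0:ℝ) < n := by exact_mod_cast hn
  by_cases hcase : 2 * M * n ≤ e * R
  · refine ⟨1, le_rfl, ?_⟩
    have h1 : (c * R ^ β / n) ≤ (e/2 * R) ^ (β - 1) := by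
      rw [div_le_iff₀ hn', Real.mul_rpow (by positivity) hR.le]
      have e1 : R ^ β = R ^ (β - 1) * R := by
        rw [← Real.rpow_add_one hR.ne']; ring_nf
      have e2 : c * D ≤ (e/2) ^ (β - 1) := by
        rw [← le_div_iff₀ hD]; exact min_le_right _ _
      rw [e1]
      have : 0 < R ^ (β - 1) := by positivity
      calc c * (R ^ (β-1) * R) ≤ c * (R ^ (β-1) * (n * D)) := by gcongr
        _ = (c * D) * R ^ (β-1) * n := by ring
        _ ≤ (e/2) ^ (β - 1) * R ^ (β-1) * n := by gcongr
    have h2 : (c * R ^ β / n) ^ s ≤ e/2 * R := by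
      calc (c * R ^ β / n) ^ s ≤ ((e/2 * R) ^ (β - 1)) ^ s :=
            Real.rpow_le_rpow (by positivity) h1 hs0.le
        _ = e/2 * R := by rw [← Real.rpow_mul (by positivity), hsb, Real.rpow_one]
    rw [Real.one_rpow]
    linarith
  · push Not at hcase
    set t : ℝ := 2 * M * n / (e * R) with ht
    have ht0 : 0 < t := by positivity
    have ht1 : 1 ≤ t := by rw [ht, one_le_div (by positivity)]; exact hcase.le
    have hρ0 : 0 < t ^ s := by positivity
    refine ⟨t ^ s, Real.one_le_rpow ht1 hs0.le, ?_⟩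
    have e1 : (t ^ s) ^ (-β) = t⁻¹ / t ^ s := by
      have : (-β : ℝ) = -(β - 1) - 1 := by ring
      rw [this, Real.rpow_sub_one hρ0.ne', ← Real.rpow_mul ht0.le]
      have : s * -(β - 1) = -1 := by linarith
      rw [this, Real.rpow_neg_one]
    have e2 : M * (t ^ s) ^ (-β) * n = (e * R / t ^ s) / 2 := by
      rw [e1]
      have : t⁻¹ = e * R / (2 * M * n) := by rw [ht, inv_div]
      rw [this]
      field_simp
    have h1 : c * R ^ β / n ≤ (e/2 * R) ^ (β - 1) / t := by
      rw [ht, Real.mul_rpow (by positivity) hR.le]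
      have e1 : R ^ β = R ^ (β - 1) * R := by
        rw [← Real.rpow_add_one hR.ne']; ring_nf
      have e2 : c ≤ (e/2) ^ (β - 1) * (e / (2*M)) := min_le_left _ _
      calc c * R ^ β / n ≤ (e/2) ^ (β - 1) * (e / (2*M)) * R ^ β / n := by gcongr
        _ = (e / 2) ^ (β - 1) * R ^ (β - 1) / (2 * M * ↑n / (e * R)) := by
          rw [e1]; field_simp
    have h2 : (c * R ^ β / n) ^ s ≤ (e * R / t ^ s) / 2 := by
      calc (c * R ^ β / n) ^ s ≤ ((e/2 * R) ^ (β - 1) / t) ^ s :=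
            Real.rpow_le_rpow (by positivity) h1 hs0.le
        _ = (e * R / t ^ s) / 2 := by
          rw [Real.div_rpow (by positivity) ht0.le, ← Real.rpow_mul (by positivity), hsb,
            Real.rpow_one]
          ring
    rw [e2]
    linarith

/-! ### Green function estimates -/

lemma green_eq {V : Type*} [DecidableEq V] (N : V → Finset V) (p : V → V → ℝ) (lam : V → ℝ)
    (hp : ∀ y u, u ∉ N y → p y u = 0)
    (htrans : ∀ x y, Summable (fun n => nstep p n x y)) (y z : V) :
    green p lam y z = (if y = z then 1 / lam z else 0) + ∑ u ∈ N y, p y u * green p lam u z := by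
  unfold green
  rw [(htrans y z).tsum_eq_zero_add]
  simp_rw [nstep_succ_left N p hp]
  rw [Summable.tsum_finsetSum (fun u _ => (htrans u z).mul_left _), mul_add, Finset.mul_sum]
  congr 1
  · rw [nstep]; split_ifs <;> simp
  · refine Finset.sum_congr rfl fun u _ => ?_
    rw [tsum_mul_left]; ring

/-- Maximum principle: the Green function is at most its bound on the diagonal. -/
lemma green_le {V : Type*} (G : SimpleGraph V) (hconn : G.Connected)
    (N : V → Finset V) (p d : V → V → ℝ)
    (hN : ∀ y u, G.Adj y u → u ∈ N y)
    (h1 : ∀ y, ∑ u ∈ N y, p y u = 1) (hpn : ∀ y u, 0 ≤ p y u)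
    (hpos : ∀ y u, G.Adj y u → 0 < p y u)
    (hBfin : ∀ (x : V) (L : ℝ), {y | d x y ≤ L}.Finite)
    (γ Cg : ℝ) (hγ : 0 < γ) (hCg : 0 < Cg) (z : V) (a : V → ℝ)
    (hz : a z ≤ Cg) (hdz : ∀ y, y ≠ z → a y ≤ Cg * d z y ^ (-γ))
    (ha : ∀ y, y ≠ z → a y = ∑ u ∈ N y, p y u * a u) (y : V) : a y ≤ Cg := by
  by_contra! hy
  have hfin : {u | Cg < a u}.Finite := by
    refine (hBfin z 1).subset fun u hu => ?_
    have hu : Cg < a u := hu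
    show d z u ≤ 1
    by_contra! h
    have huz : u ≠ z := by rintro rfl; linarith
    have h2 := hdz u huz
    have : d z u ^ (-γ) ≤ 1 := Real.rpow_le_one_of_one_le_of_nonpos h.le (by linarith)
    nlinarith
  obtain ⟨m, hm, hmax⟩ := Set.exists_max_image _ a hfin ⟨y, hy⟩
  have hm : Cg < a m := hm
  have hall : ∀ v, a v ≤ a m := by
    intro v
    by_cases hv : Cg < a v
    · exact hmax v hv
    · linarith
  have step : ∀ v u, G.Adj v u → a v = a m → a u = a m := by
    intro v u hvu hv
    have hvz : v ≠ z := by rintro rfl; linarith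
    have e := ha v hvz
    have e2 : ∑ u ∈ N v, p v u * (a m - a u) = 0 := by
      simp_rw [mul_sub]
      rw [Finset.sum_sub_distrib, ← Finset.sum_mul, h1, ← e, hv]; ring
    rw [Finset.sum_eq_zero_iff_of_nonneg
      (fun u _ => mul_nonneg (hpn _ _) (sub_nonneg.2 (hall u)))] at e2
    have := e2 u (hN _ _ hvu)
    rcases mul_eq_zero.1 this with h | h
    · exact absurd h (hpos v u hvu).ne'
    · linarith
  have walk : ∀ v u, G.Walk v u → a v = a m → a u = a m := by
    intro v u W
    induction W with
    | nil => exact id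
    | cons h _ ih => intro hv; exact ih (step _ _ h hv)
  obtain ⟨W⟩ := hconn.preconnected m z
  have := walk m z W rfl
  linarith

/-- Sum of the Green function over balls. -/
lemma green_ball {V : Type*} (d : V → V → ℝ) (lam : V → ℝ) (g : V → V → ℝ)
    (hlam : ∀ y, 0 ≤ lam y) (hg : ∀ y z, 0 ≤ g y z) (hd_self : ∀ x, d x x = 0)
    (hBfin : ∀ (x : V) (L : ℝ), {y | d x y ≤ L}.Finite)
    (α β : ℝ) (hβ₂ : 2 ≤ β) (hβα : β < α)
    (CV Cg : ℝ) (hCV : 0 < CV) (hCg : 0 < Cg)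
    (hVol : ∀ (x : V) (L : ℝ), 1 ≤ L → ∑ y ∈ (hBfin x L).toFinset, lam y ≤ CV * L ^ α)
    (hgC : ∀ y z, g y z ≤ Cg)
    (hGoff : ∀ x y : V, x ≠ y → g x y ≤ Cg * d x y ^ (-(α - β))) :
    ∃ K : ℝ, 0 < K ∧ ∀ (y : V) (r : ℝ), 1 ≤ r →
      ∑ z ∈ (hBfin y r).toFinset, g y z * lam z ≤ K * r ^ β := by
  classical
  set K : ℝ := Cg * CV * 2 ^ α with hK
  have hK0 : 0 < K := by positivity
  have h2β : (2:ℝ) ≤ 2 ^ β := by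
    calc (2:ℝ) = 2 ^ (1:ℝ) := by simp
      _ ≤ 2 ^ β := Real.rpow_le_rpow_of_exponent_le (by norm_num) (by linarith)
  have dy : ∀ (y : V) (k : ℕ),
      ∑ z ∈ (hBfin y (2^k)).toFinset, g y z * lam z ≤ K * ((2:ℝ)^k) ^ β := by
    intro y k
    induction k with
    | zero =>
      have hv := hVol y (2^0) (by norm_num)
      simp only [pow_zero, Real.one_rpow, mul_one] at hv ⊢
      calc ∑ z ∈ (hBfin y 1).toFinset, g y z * lam z
          ≤ ∑ z ∈ (hBfin y 1).toFinset, Cg * lam z :=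
            Finset.sum_le_sum fun z _ => mul_le_mul_of_nonneg_right (hgC y z) (hlam z)
        _ = Cg * ∑ z ∈ (hBfin y 1).toFinset, lam z := by rw [Finset.mul_sum]
        _ ≤ Cg * CV := by gcongr
        _ ≤ K := by
          rw [hK]
          exact le_mul_of_one_le_right (by positivity)
            (Real.one_le_rpow (by norm_num) (by linarith))
    | succ k ih =>
      set T : ℝ := 2 ^ k with hT
      have hT1 : 1 ≤ T := one_le_pow₀ (by norm_num)
      have hT0 : 0 < T := by positivity
      have e : (2:ℝ)^(k+1) = T * 2 := pow_succ _ _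
      rw [e]
      have hv := hVol y (T * 2) (by linarith)
      have hsub : (hBfin y T).toFinset ⊆ (hBfin y (T*2)).toFinset := by
        intro z hz
        simp only [Set.Finite.mem_toFinset, Set.mem_setOf_eq] at hz ⊢
        linarith
      rw [← Finset.sum_sdiff hsub]
      have hrest : ∑ z ∈ (hBfin y (T*2)).toFinset \ (hBfin y T).toFinset, g y z * lam z
          ≤ K * T ^ β := by
        calc ∑ z ∈ (hBfin y (T*2)).toFinset \ (hBfin y T).toFinset, g y z * lam z
            ≤ ∑ z ∈ (hBfin y (T*2)).toFinset \ (hBfin y T).toFinset,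
                Cg * T ^ (-(α-β)) * lam z := by
              refine Finset.sum_le_sum fun z hz => mul_le_mul_of_nonneg_right ?_ (hlam z)
              simp only [Finset.mem_sdiff, Set.Finite.mem_toFinset, Set.mem_setOf_eq,
                not_le] at hz
              have hne : y ≠ z := by
                rintro rfl
                rw [hd_self] at hz; linarith
              refine (hGoff y z hne).trans ?_
              gcongr ?_ * ?_
              exact Real.rpow_le_rpow_of_nonpos hT0 hz.2.le (by linarith)
          _ ≤ ∑ z ∈ (hBfin y (T*2)).toFinset, Cg * T ^ (-(α-β)) * lam z := by
              refine Finset.sum_le_sum_of_subset_of_nonneg Finset.sdiff_subset fun z _ _ => ?_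
              have := hlam z
              positivity
          _ = Cg * T ^ (-(α-β)) * ∑ z ∈ (hBfin y (T*2)).toFinset, lam z := by
              rw [Finset.mul_sum]
          _ ≤ Cg * T ^ (-(α-β)) * (CV * (T*2)^α) := by gcongr
          _ = K * (T ^ (-(α-β)) * T ^ α) := by
              rw [Real.mul_rpow hT0.le (by norm_num), hK]; ring
          _ = K * T ^ β := by
              rw [← Real.rpow_add hT0]; ring_nf
      rw [Real.mul_rpow hT0.le (by norm_num)]
      have : 0 < K * T ^ β := by positivity
      nlinarith
  refine ⟨K * 2 ^ β, by positivity, fun y r hr => ?_⟩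
  obtain ⟨k, hk1, hk2⟩ := exists_nat_pow_near hr (by norm_num : (1:ℝ) < 2)
  have hsub : (hBfin y r).toFinset ⊆ (hBfin y (2^(k+1))).toFinset := by
    intro z hz
    simp only [Set.Finite.mem_toFinset, Set.mem_setOf_eq] at hz ⊢
    linarith
  calc ∑ z ∈ (hBfin y r).toFinset, g y z * lam z
      ≤ ∑ z ∈ (hBfin y (2^(k+1))).toFinset, g y z * lam z :=
        Finset.sum_le_sum_of_subset_of_nonneg hsub fun z _ _ => mul_nonneg (hg y z) (hlam z)
    _ ≤ K * ((2:ℝ)^(k+1)) ^ β := dy y (k+1)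
    _ = K * 2 ^ β * ((2:ℝ)^k) ^ β := by
        rw [pow_succ, Real.mul_rpow (by positivity) (by norm_num)]; ring
    _ ≤ K * 2 ^ β * r ^ β := by gcongr

/-- Single-scale supersolution. -/
lemma single_scale {V : Type*} (N : V → Finset V) (p d : V → V → ℝ) (lam : V → ℝ)
    (g : V → V → ℝ)
    (h1 : ∀ y, ∑ u ∈ N y, p y u = 1)
    (hlam : ∀ y, 0 < lam y) (hg : ∀ y z, 0 ≤ g y z) (hd_symm : ∀ x y, d x y = d y x)
    (hd_nonneg : ∀ x y, 0 ≤ d x y)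
    (hd_tri : ∀ x y z, d x z ≤ d x y + d y z)
    (hd_self : ∀ x, d x x = 0)
    (hBfin : ∀ (x : V) (L : ℝ), {y | d x y ≤ L}.Finite)
    (α β : ℝ) (hβ₂ : 2 ≤ β) (hβα : β < α)
    (cV CV cg Cg : ℝ) (hcV : 0 < cV) (hCV : 0 < CV) (hcg : 0 < cg) (hCg : 0 < Cg)
    (hVol : ∀ (x : V) (L : ℝ), 1 ≤ L →
      cV * L ^ α ≤ ∑ y ∈ (hBfin x L).toFinset, lam y ∧
        ∑ y ∈ (hBfin x L).toFinset, lam y ≤ CV * L ^ α)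
    (hgC : ∀ y z, g y z ≤ Cg) (hgc : ∀ y, cg ≤ g y y)
    (hdpos : ∀ y z, y ≠ z → 0 < d y z)
    (hGoff : ∀ x y : V, x ≠ y → cg * d x y ^ (-(α - β)) ≤ g x y ∧
      g x y ≤ Cg * d x y ^ (-(α - β)))
    (hgP : ∀ y z, lam z * (g y z - ∑ u ∈ N y, p y u * g u z) ≤ 1 ∧
      (y ≠ z → g y z - ∑ u ∈ N y, p y u * g u z = 0)) :
    ∃ L ε M : ℝ, 1 ≤ L ∧ 0 < ε ∧ ε ≤ 1 ∧ 0 < M ∧ ∀ ρ : ℝ, 1 ≤ ρ → ∀ y₀ : V,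
      ∃ ψ : V → ℝ, (∀ y, 0 ≤ ψ y) ∧ (∀ y, L * ρ < d y₀ y → 1 ≤ ψ y) ∧ ψ y₀ ≤ 1 - ε ∧
      ∀ y, ∑ u ∈ N y, p y u * ψ u ≤ Real.exp (M * ρ ^ (-β)) * ψ y := by
  classical
  obtain ⟨K, hK0, hK⟩ := green_ball d lam g (fun y => (hlam y).le) hg hd_self hBfin α β hβ₂ hβα
    CV Cg hCV hCg (fun x L h => (hVol x L h).2) hgC (fun x y h => (hGoff x y h).2)
  have hγ : 0 < α - β := by linarith
  -- choice of the ratio of the radii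
  obtain ⟨A, hA1, hA⟩ : ∃ A : ℝ, 1 ≤ A ∧ Cg * CV * A ^ (-(α - β)) ≤ cg * cV / 2 := by
    have ht := (tendsto_rpow_neg_atTop hγ).const_mul (Cg * CV)
    rw [mul_zero] at ht
    have hev := (ht.eventually (gt_mem_nhds (show 0 < cg * cV / 2 by positivity))).and
      (Filter.eventually_ge_atTop (1:ℝ))
    obtain ⟨A, h, h'⟩ := hev.exists
    exact ⟨A, h', h.le⟩
  set b : ℝ := cg * cV / 2 with hb
  have hb0 : 0 < b := by positivity
  set K' : ℝ := max (K * (A + 2) ^ β) b with hK'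
  have hK'0 : 0 < K' := lt_max_of_lt_right hb0
  set δ : ℝ := 1 / (2 * K') with hδ
  have hδ0 : 0 < δ := by positivity
  have hδK : δ * K' = 1 / 2 := by rw [hδ]; field_simp
  have hbK : b ≤ K' := le_max_right _ _
  refine ⟨A + 1, δ * b, 2 * δ, by linarith, by positivity, by nlinarith, by positivity, ?_⟩
  intro ρ hρ y₀
  have hρ0 : 0 < ρ := by linarith
  set S := (hBfin y₀ ρ).toFinset with hS
  set F : V → ℝ := fun y => ∑ z ∈ S, g y z * lam z with hF
  have memS : ∀ z ∈ S, d y₀ z ≤ ρ := by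
    intro z hz
    simpa [hS] using hz
  have hρβ : 0 < ρ ^ β := by positivity
  have hρρ : ρ ^ (-β) * ρ ^ β = 1 := by rw [← Real.rpow_add hρ0]; simp
  have hραβ : ρ ^ (-(α-β)) * ρ ^ α = ρ ^ β := by rw [← Real.rpow_add hρ0]; ring_nf
  have hρm : 0 < ρ ^ (-β) := by positivity
  -- lower bound at the centre
  have Flow : 2 * b * ρ ^ β ≤ F y₀ := by
    calc 2 * b * ρ ^ β = cg * ρ ^ (-(α-β)) * (cV * ρ ^ α) := by
          rw [← hραβ, hb]; ring
      _ ≤ cg * ρ ^ (-(α-β)) * ∑ z ∈ S, lam z := by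
          gcongr
          exact (hVol y₀ ρ hρ).1
      _ = ∑ z ∈ S, cg * ρ ^ (-(α-β)) * lam z := by rw [Finset.mul_sum]
      _ ≤ F y₀ := by
          refine Finset.sum_le_sum fun z hz => mul_le_mul_of_nonneg_right ?_ (hlam z).le
          by_cases h : y₀ = z
          · subst h
            refine le_trans ?_ (hgc y₀)
            have : ρ ^ (-(α-β)) ≤ 1 := Real.rpow_le_one_of_one_le_of_nonpos hρ (by linarith)
            nlinarith
          · refine le_trans ?_ (hGoff y₀ z h).1
            gcongr ?_ * ?_
            exact Real.rpow_le_rpow_of_nonpos (hdpos _ _ h) (memS z hz) (by linarith)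
  -- upper bound outside
  have Fout : ∀ y, (A + 1) * ρ < d y₀ y → F y ≤ b * ρ ^ β := by
    intro y hy
    calc F y ≤ ∑ z ∈ S, Cg * (A * ρ) ^ (-(α-β)) * lam z := by
          refine Finset.sum_le_sum fun z hz => mul_le_mul_of_nonneg_right ?_ (hlam z).le
          have h2 := hd_tri y₀ z y
          have h3 := memS z hz
          rw [hd_symm z y] at h2
          have h4 : A * ρ < d y z := by linarith
          have hAρ : 0 < A * ρ := by positivity
          have hne : y ≠ z := by
            rintro rfl
            rw [hd_self] at h4; linarith
          refine (hGoff y z hne).2.trans ?_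
          gcongr ?_ * ?_
          exact Real.rpow_le_rpow_of_nonpos hAρ h4.le (by linarith)
      _ = Cg * (A * ρ) ^ (-(α-β)) * ∑ z ∈ S, lam z := by rw [Finset.mul_sum]
      _ ≤ Cg * (A * ρ) ^ (-(α-β)) * (CV * ρ ^ α) := by
          gcongr
          exact (hVol y₀ ρ hρ).2
      _ = Cg * CV * A ^ (-(α-β)) * ρ ^ β := by
          rw [← hραβ, Real.mul_rpow (by linarith) hρ0.le]; ring
      _ ≤ b * ρ ^ β := by gcongr
  -- upper bound everywhere
  have Fup : ∀ y, F y ≤ K' * ρ ^ β := by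
    intro y
    by_cases hy : (A + 1) * ρ < d y₀ y
    · exact (Fout y hy).trans (by gcongr)
    · push Not at hy
      have hsub : S ⊆ (hBfin y ((A+2) * ρ)).toFinset := by
        intro z hz
        simp only [Set.Finite.mem_toFinset, Set.mem_setOf_eq]
        have h2 := hd_tri y y₀ z
        have h3 := memS z hz
        rw [hd_symm y y₀] at h2
        linarith
      calc F y ≤ ∑ z ∈ (hBfin y ((A+2) * ρ)).toFinset, g y z * lam z :=
            Finset.sum_le_sum_of_subset_of_nonneg hsub
              fun z _ _ => mul_nonneg (hg y z) (hlam z).le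
        _ ≤ K * ((A+2) * ρ) ^ β := hK y _ (by nlinarith)
        _ = K * (A+2) ^ β * ρ ^ β := by rw [Real.mul_rpow (by linarith) hρ0.le]; ring
        _ ≤ K' * ρ ^ β := by
            gcongr
            exact le_max_left _ _
  -- Laplacian
  have FP : ∀ y, F y - ∑ u ∈ N y, p y u * F u ≤ 1 := by
    intro y
    have e : F y - ∑ u ∈ N y, p y u * F u =
        ∑ z ∈ S, lam z * (g y z - ∑ u ∈ N y, p y u * g u z) := by
      simp only [hF, Finset.mul_sum, mul_sub, Finset.sum_sub_distrib]
      rw [Finset.sum_comm]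
      congr 1
      · exact Finset.sum_congr rfl fun z _ => by ring
      · exact Finset.sum_congr rfl fun z _ => Finset.sum_congr rfl fun u _ => by ring
    rw [e]
    calc ∑ z ∈ S, lam z * (g y z - ∑ u ∈ N y, p y u * g u z)
        ≤ ∑ z ∈ S, (if z = y then (1:ℝ) else 0) := by
          refine Finset.sum_le_sum fun z _ => ?_
          split_ifs with h
          · exact (hgP y z).1
          · rw [(hgP y z).2 (Ne.symm h), mul_zero]
      _ ≤ 1 := by
          rw [Finset.sum_ite_eq']
          split_ifs <;> norm_num
  set κ := δ * ρ ^ (-β) with hκ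
  have hκ0 : 0 < κ := by positivity
  have hκρ : κ * ρ ^ β = δ := by rw [hκ, mul_assoc, hρρ, mul_one]
  have half : ∀ y, 1 / 2 ≤ 1 - κ * F y + δ * b := by
    intro y
    have : κ * F y ≤ κ * (K' * ρ ^ β) := mul_le_mul_of_nonneg_left (Fup y) hκ0.le
    have e : κ * (K' * ρ ^ β) = 1 / 2 := by
      rw [← hδK, ← hκρ]; ring
    have : 0 < δ * b := by positivity
    linarith
  refine ⟨fun y => 1 - κ * F y + δ * b, fun y => by linarith [half y], ?_, ?_, ?_⟩
  · intro y hy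
    have : κ * F y ≤ κ * (b * ρ ^ β) := mul_le_mul_of_nonneg_left (Fout y hy) hκ0.le
    have e : κ * (b * ρ ^ β) = δ * b := by rw [← hκρ]; ring
    linarith
  · have : κ * (2 * b * ρ ^ β) ≤ κ * F y₀ := mul_le_mul_of_nonneg_left Flow hκ0.le
    have e : κ * (2 * b * ρ ^ β) = 2 * (δ * b) := by rw [← hκρ]; ring
    linarith
  · intro y
    have e : ∑ u ∈ N y, p y u * (1 - κ * F u + δ * b) =
        1 + δ * b - κ * ∑ u ∈ N y, p y u * F u := by
      have : ∀ u, p y u * (1 - κ * F u + δ * b) =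
          p y u * (1 + δ * b) - κ * (p y u * F u) := fun u => by ring
      simp_rw [this]
      rw [Finset.sum_sub_distrib, ← Finset.sum_mul, h1, ← Finset.mul_sum]; ring
    rw [e]
    have h2 := half y
    have h3 := FP y
    have h4 : κ * (F y - ∑ u ∈ N y, p y u * F u) ≤ κ * 1 :=
      mul_le_mul_of_nonneg_left h3 hκ0.le
    have h5 : 1 + 2 * κ ≤ Real.exp (2 * δ * ρ ^ (-β)) := by
      have := Real.add_one_le_exp (2 * δ * ρ ^ (-β))
      have e : 2 * δ * ρ ^ (-β) = 2 * κ := by rw [hκ]; ring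
      linarith
    have h6 : (1 + 2 * κ) * (1 - κ * F y + δ * b) ≤
        Real.exp (2 * δ * ρ ^ (-β)) * (1 - κ * F y + δ * b) :=
      mul_le_mul_of_nonneg_right h5 (by linarith)
    nlinarith

/-- sub-Gaussian upper bound on the probability of exiting B(x,R) within n steps:
P_x(T_{B(x,R)} ≤ n) ≤ C exp(−(c R^β/n)^{1/(β−1)}). -/
theorem exit_time_upper_tail
    {V : Type*} (G : SimpleGraph V) [∀ v : V, Fintype (G.neighborSet v)] [Infinite V]
    (hconn : G.Connected)
    (w : V → V → ℝ) (lam : V → ℝ) (p : V → V → ℝ) (d : V → V → ℝ)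
    (hw_symm : ∀ x y, w x y = w y x)
    (hw_nonneg : ∀ x y, 0 ≤ w x y)
    (hw_adj : ∀ x y, 0 < w x y ↔ G.Adj x y)
    (hlam : ∀ x, lam x = ∑ y ∈ G.neighborFinset x, w x y)
    (hp : ∀ x y, p x y = w x y / lam x)
    (htrans : ∀ x y, Summable (fun n => nstep p n x y))
    (c₀ : ℝ) (hc₀ : 0 < c₀) (hp₀ : ∀ x y, G.Adj x y → c₀ ≤ p x y)
    (hd_symm : ∀ x y, d x y = d y x)
    (hd_self : ∀ x, d x x = 0)
    (hd_nonneg : ∀ x y, 0 ≤ d x y)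
    (hd_tri : ∀ x y z, d x z ≤ d x y + d y z)
    (hBfin : ∀ (x : V) (L : ℝ), {y | d x y ≤ L}.Finite)
    (α β : ℝ) (hα : 2 < α) (hβ₂ : 2 ≤ β) (hβα : β < α)
    (cV CV : ℝ) (hcV : 0 < cV)
    (hVol : ∀ (x : V) (L : ℝ), 1 ≤ L →
      cV * L ^ α ≤ ∑ y ∈ (hBfin x L).toFinset, lam y ∧
        ∑ y ∈ (hBfin x L).toFinset, lam y ≤ CV * L ^ α)
    (cg Cg : ℝ) (hcg : 0 < cg)
    (hGdiag : ∀ x : V, cg ≤ green p lam x x ∧ green p lam x x ≤ Cg)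
    (hGoff : ∀ x y : V, x ≠ y →
      cg * d x y ^ (-(α - β)) ≤ green p lam x y ∧
        green p lam x y ≤ Cg * d x y ^ (-(α - β))) :
    ∃ C c : ℝ, 0 < C ∧ 0 < c ∧ ∀ (x : V) (R : ℝ) (n : ℕ), 0 < R → 0 < n →
      1 - ∑' y : V, nstep (killedKernel p {v | d x v ≤ R}) n x y ≤
        C * Real.exp (-(c * R ^ β / n) ^ ((1 : ℝ) / (β - 1))) := by
  classical
  set N : V → Finset V := fun y => G.neighborFinset y with hNdef
  have hex : ∀ y, ∃ u, G.Adj y u := fun y => hconn.preconnected.exists_adj_of_nontrivial y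
  have hlam0 : ∀ y, 0 < lam y := by
    intro y
    obtain ⟨u, hu⟩ := hex y
    rw [hlam]
    exact Finset.sum_pos' (fun z _ => hw_nonneg y z)
      ⟨u, by simpa using hu, (hw_adj y u).2 hu⟩
  have hpn : ∀ y u, 0 ≤ p y u := fun y u => by
    rw [hp]; exact div_nonneg (hw_nonneg y u) (hlam0 y).le
  have hp0 : ∀ y u, u ∉ N y → p y u = 0 := by
    intro y u hu
    have : ¬ 0 < w y u := by
      rw [hw_adj]; simpa [hNdef] using hu
    rw [hp, le_antisymm (not_lt.1 this) (hw_nonneg y u), zero_div]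
  have h1 : ∀ y, ∑ u ∈ N y, p y u = 1 := by
    intro y
    simp_rw [hp]
    rw [← Finset.sum_div, ← hlam, div_self (hlam0 y).ne']
  have hadjN : ∀ y u, G.Adj y u → u ∈ N y := fun y u h => by simpa [hNdef] using h
  have hNadj : ∀ y u, u ∈ N y → G.Adj y u := fun y u h => by simpa [hNdef] using h
  set g := green p lam with hgdef
  have hg : ∀ y z, 0 ≤ g y z := fun y z =>
    mul_nonneg (one_div_nonneg.2 (hlam0 z).le) (tsum_nonneg fun n => nstep_nonneg p hpn n y z)
  have hgeq : ∀ y z, g y z = (if y = z then 1 / lam z else 0) + ∑ u ∈ N y, p y u * g u z :=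
    green_eq N p lam hp0 htrans
  obtain ⟨v₀⟩ : Nonempty V := inferInstance
  have hCg : 0 < Cg := hcg.trans_le ((hGdiag v₀).1.trans (hGdiag v₀).2)
  have hCV : 0 < CV := by
    have := hVol v₀ 1 le_rfl
    simp only [Real.one_rpow, mul_one] at this
    linarith [this.1, this.2]
  have hγ : 0 < α - β := by linarith
  have hgC : ∀ y z, g y z ≤ Cg := by
    intro y z
    refine green_le G hconn N p d hadjN h1 hpn
      (fun y u h => hc₀.trans_le (hp₀ y u h)) hBfin (α - β) Cg hγ hCg z (fun y => g y z)
      (hGdiag z).2 ?_ ?_ y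
    · intro y hy
      rw [hd_symm z y]
      exact (hGoff y z hy).2
    · intro y hy
      have := hgeq y z
      rwa [if_neg hy, zero_add] at this
  -- positivity of the Green function and of the distance
  have hgpos : ∀ y z, 0 < g y z := by
    intro y z
    obtain ⟨W⟩ := hconn.preconnected y z
    induction W with
    | nil => exact hcg.trans_le (hGdiag _).1
    | @cons a b c h _ ih =>
      rw [hgeq]
      have h2 : 0 < ∑ u ∈ N a, p a u * g u c :=
        Finset.sum_pos' (fun u _ => mul_nonneg (hpn _ _) (hg _ _))
          ⟨b, hadjN _ _ h, mul_pos (hc₀.trans_le (hp₀ _ _ h)) ih⟩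
      have h3 : 0 ≤ (if a = c then 1 / lam c else 0) := by
        split_ifs
        · exact one_div_nonneg.2 (hlam0 c).le
        · exact le_rfl
      linarith
  have hdpos : ∀ y z, y ≠ z → 0 < d y z := by
    intro y z h
    refine (hd_nonneg y z).lt_of_ne fun h0 => ?_
    have h2 := (hGoff y z h).2
    rw [← h0, Real.zero_rpow (by linarith), mul_zero] at h2
    exact absurd (hgpos y z) (not_lt.2 h2)
  -- neighbours are close
  obtain ⟨D, hD0, hD⟩ : ∃ D : ℝ, 0 < D ∧ ∀ y, ∀ u ∈ N y, d y u ≤ D := by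
    refine ⟨(Cg / (c₀ * cg)) ^ (1 / (α - β)), by positivity, fun y u hu => ?_⟩
    have hadj := hNadj y u hu
    have hne : y ≠ u := hadj.ne
    have hd := hdpos y u hne
    have h2 : c₀ * cg ≤ g y u := by
      rw [hgeq, if_neg hne, zero_add]
      calc c₀ * cg ≤ p y u * g u u :=
            mul_le_mul (hp₀ y u hadj) (hGdiag u).1 hcg.le (hpn y u)
        _ ≤ _ := Finset.single_le_sum (f := fun v => p y v * g v u)
            (fun v _ => mul_nonneg (hpn _ _) (hg _ _)) hu
    have h3 := h2.trans (hGoff y u hne).2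
    rw [Real.rpow_neg hd.le] at h3
    have h4 : d y u ^ (α - β) ≤ Cg / (c₀ * cg) := by
      have hdd : 0 < d y u ^ (α - β) := by positivity
      rw [le_div_iff₀ (by positivity)]
      rw [← div_eq_mul_inv, le_div_iff₀ hdd] at h3
      linarith
    calc d y u = (d y u ^ (α - β)) ^ (1 / (α - β)) := by
          rw [← Real.rpow_mul hd.le, mul_one_div_cancel hγ.ne', Real.rpow_one]
      _ ≤ _ := Real.rpow_le_rpow (by positivity) h4 (by positivity)
  obtain ⟨L, ε, M, hL, hε, hε1, hM, hψ⟩ := single_scale N p d lam g h1 hlam0 hg hd_symm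
    hd_nonneg hd_tri hd_self hBfin α β hβ₂ hβα cV CV cg Cg hcV hCV hcg hCg hVol hgC
    (fun y => (hGdiag y).1) hdpos hGoff (by
      intro y z
      have e := hgeq y z
      constructor
      · by_cases h : y = z
        · rw [if_pos h] at e
          have : g y z - ∑ u ∈ N y, p y u * g u z = 1 / lam z := by linarith
          rw [this, mul_one_div_cancel (hlam0 z).ne']
        · rw [if_neg h, zero_add] at e
          rw [← e, sub_self, mul_zero]; norm_num
      · intro h
        rw [if_neg h, zero_add] at e
        rw [← e, sub_self])
  have hLD : 0 < L + D := by linarith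
  obtain ⟨c, hc, hopt⟩ := optimize β M (ε / (L + D)) D hβ₂ hM (by positivity) hD0
  refine ⟨Real.exp ε, c, Real.exp_pos _, hc, fun x R n hR hn => ?_⟩
  have hQ : 1 - ∑' y : V, nstep (killedKernel p {v | d x v ≤ R}) n x y =
      exitQ p {v | d x v ≤ R} n x := by
    rw [exitQ, if_pos]
    show d x x ≤ R
    rw [hd_self]; exact hR.le
  rw [hQ]
  by_cases hRn : R ≤ n * D
  · obtain ⟨ρ, hρ, hexp⟩ := hopt R n hR hn hRn
    have hρ0 : 0 < ρ := by linarith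
    set r := L * ρ with hr
    have hr0 : 0 < r := by positivity
    have hrD : r + D ≤ (L + D) * ρ := by nlinarith
    set j := ⌊R / (r + D)⌋₊ with hj
    have hj1 : (j:ℝ) * (r + D) ≤ R := by
      rw [← le_div_iff₀ (by positivity)]
      exact Nat.floor_le (by positivity)
    have hj2 : R / ((L + D) * ρ) - 1 ≤ j := by
      have h2 := Nat.lt_floor_add_one (R / (r + D))
      have h3 : R / ((L + D) * ρ) ≤ R / (r + D) := by gcongr
      rw [← hj] at h2
      linarith
    have hit := exitQ_iter N p d hp0 h1 hpn hd_self hd_tri D hD0.le hD r (M * ρ ^ (-β)) ε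
      hr0.le (by positivity) hε1 (hψ ρ hρ) x R j n x (by rw [hd_self]; linarith)
    refine hit.trans ?_
    have h4 : (1 - ε) ^ j ≤ Real.exp (-(ε * j)) := by
      have h5 : 1 - ε ≤ Real.exp (-ε) := by
        have := Real.add_one_le_exp (-ε); linarith
      calc (1 - ε) ^ j ≤ (Real.exp (-ε)) ^ j := pow_le_pow_left₀ (by linarith) h5 j
        _ = Real.exp (-(ε * j)) := by rw [← Real.exp_nat_mul]; ring_nf
    calc Real.exp (M * ρ ^ (-β) * n) * (1 - ε) ^ j
        ≤ Real.exp (M * ρ ^ (-β) * n) * Real.exp (-(ε * j)) := by gcongr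
      _ = Real.exp (M * ρ ^ (-β) * n - ε * j) := by rw [← Real.exp_add]; ring_nf
      _ ≤ Real.exp (ε + -(c * R ^ β / n) ^ ((1 : ℝ) / (β - 1))) := by
          apply Real.exp_le_exp.2
          have h6 : ε * (R / ((L + D) * ρ) - 1) ≤ ε * j := mul_le_mul_of_nonneg_left hj2 hε.le
          have h7 : ε * (R / ((L + D) * ρ) - 1) = ε / (L + D) * R / ρ - ε := by
            field_simp
          linarith
      _ = _ := Real.exp_add _ _
  · push Not at hRn
    refine (exitQ_short N p d hp0 h1 hpn hd_tri D hD0.le hD x R n x ?_).trans (by positivity)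
    rw [hd_self]; linarith
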